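/- arXiv:2103.13857 — 3 statements merged into one kernel-verified Lean document; each statement's English description precedes it below -/
import Mathlib

section
/- Let n ≥ 2 and 0 < ρ ≤ R. Let f, g : S^{n-1} → ℝ be continuous with ρ ≤ f(ω) ≤ R and ρ ≤ g(ω) ≤ R for all ω. Then for every x ∈ ℝⁿ with ‖x‖ ≤ R, |dist(x, ℝⁿ \ Ω_f) − dist(x, ℝⁿ \ Ω_g)| ≤ (R/ρ)·sup_{ω ∈ S^{n-1}} |f(ω) − g(ω)|. In particular, if f_k → f uniformly on S^{n-1} with ρ ≤ f_k ≤ R, then Ω_{f_k} → Ω_f in the Hausdorff complementary metric on the hold-all ball B_R(0). -/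
open Real Metric
open scoped RealInnerProductSpace

/-- The star-shaped domain associated to a positive function on the unit sphere:
`Ω_f = {x : x = 0, or x ≠ 0 and ‖x‖ < f(x/‖x‖)}`. -/
def Omega {n : ℕ} (f : EuclideanSpace ℝ (Fin n) → ℝ) : Set (EuclideanSpace ℝ (Fin n)) :=
  {x | x = 0 ∨ (x ≠ 0 ∧ ‖x‖ < f (‖x‖⁻¹ • x))}

/-!
If `y` lies outside the star-shaped domain of `f`, write `y = r • ω` with `‖ω‖ = 1` and `f ω ≤ r`.
When `|f - g| ≤ M` on the sphere, `g ω ≤ r + M`, so moving `y` radially outwards by `M` leaves the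
domain of `g`. Hence the two complements are at Hausdorff distance at most `M`, and the distance
functions to two sets differ by at most the Hausdorff distance of the sets. This gives the estimate
with constant `1 ≤ R / ρ`.
-/

open NormedSpace Set Filter

theorem abs_infDist_sub_infDist_le_of_hausdorffEDist_le {X : Type*} [PseudoMetricSpace X]
    {s t : Set X} {M : ℝ} (hM : 0 ≤ M) (hst : hausdorffEDist s t ≤ ENNReal.ofReal M) (x : X) :
    |infDist x s - infDist x t| ≤ M := by
  have hfin : hausdorffEDist s t ≠ ⊤ := ne_top_of_le_ne_top ENNReal.ofReal_ne_top hst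
  have hdist : hausdorffDist s t ≤ M := ENNReal.toReal_le_of_le_ofReal hM hst
  have hts : infDist x t ≤ infDist x s + hausdorffDist s t :=
    infDist_le_infDist_add_hausdorffDist hfin
  have hst' : infDist x s ≤ infDist x t + hausdorffDist t s :=
    infDist_le_infDist_add_hausdorffDist (hausdorffEDist_comm (s := s) (t := t) ▸ hfin)
  rw [hausdorffDist_comm] at hst'
  exact abs_sub_le_iff.2 ⟨by linarith, by linarith⟩

section StarDomain

variable {E : Type*} [NormedAddCommGroup E] [NormedSpace ℝ E]

/-- The star-shaped domain with radial function `f`, in an arbitrary real normed space; only the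
values of `f` on the unit sphere matter. It extends `Omega`, with `NormedSpace.normalize x` for
`‖x‖⁻¹ • x`. -/
def starDomain (f : E → ℝ) : Set E :=
  {x | x = 0 ∨ (x ≠ 0 ∧ ‖x‖ < f (normalize x))}

theorem Omega_eq_starDomain {n : ℕ} (f : EuclideanSpace ℝ (Fin n) → ℝ) :
    Omega f = starDomain f :=
  rfl

variable {f g : E → ℝ}

theorem mem_compl_starDomain {x : E} :
    x ∈ (starDomain f)ᶜ ↔ x ≠ 0 ∧ f (normalize x) ≤ ‖x‖ := by
  simp only [starDomain, mem_compl_iff, mem_ofPred_eq, not_or, not_and, not_lt]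
  tauto

theorem smul_mem_compl_starDomain_iff {ω : E} (hω : ‖ω‖ = 1) {r : ℝ} (hr : 0 < r) :
    r • ω ∈ (starDomain f)ᶜ ↔ f ω ≤ r := by
  have hω0 : ω ≠ 0 := norm_ne_zero_iff.1 (hω ▸ one_ne_zero)
  rw [mem_compl_starDomain, normalize_smul_of_pos hr, normalize_eq_self_of_norm_eq_one hω,
    norm_smul_of_nonneg hr.le, hω, mul_one, and_iff_right (smul_ne_zero hr.ne' hω0)]

theorem exists_mem_compl_starDomain_edist_le {M : ℝ}
    (hfg : ∀ ω ∈ sphere (0 : E) 1, |f ω - g ω| ≤ M) {y : E} (hy : y ∈ (starDomain f)ᶜ) :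
    ∃ z ∈ (starDomain g)ᶜ, edist y z ≤ ENNReal.ofReal M := by
  obtain ⟨hy0, hfy⟩ := mem_compl_starDomain.1 hy
  have hω : ‖normalize y‖ = 1 := norm_normalize hy0
  have hfgy : |f (normalize y) - g (normalize y)| ≤ M := hfg _ (mem_sphere_zero_iff_norm.2 hω)
  have hM : 0 ≤ M := (abs_nonneg _).trans hfgy
  have hr : 0 < ‖y‖ + M := add_pos_of_pos_of_nonneg (norm_pos_iff.2 hy0) hM
  refine ⟨(‖y‖ + M) • normalize y, (smul_mem_compl_starDomain_iff hω hr).2 ?_, ?_⟩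
  · linarith [(abs_sub_le_iff.1 hfgy).2]
  · rw [edist_dist, add_smul, norm_smul_normalize, dist_self_add_right,
      norm_smul_of_nonneg hM, hω, mul_one]

theorem hausdorffEDist_compl_starDomain_le {M : ℝ}
    (hfg : ∀ ω ∈ sphere (0 : E) 1, |f ω - g ω| ≤ M) :
    hausdorffEDist (starDomain f)ᶜ (starDomain g)ᶜ ≤ ENNReal.ofReal M :=
  hausdorffEDist_le_of_mem_edist (fun _ => exists_mem_compl_starDomain_edist_le hfg)
    fun _ => exists_mem_compl_starDomain_edist_le fun ω hω => abs_sub_comm (f ω) (g ω) ▸ hfg ω hω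

theorem abs_infDist_compl_starDomain_sub_le [Nontrivial E] {M : ℝ}
    (hfg : ∀ ω ∈ sphere (0 : E) 1, |f ω - g ω| ≤ M) (x : E) :
    |infDist x (starDomain f)ᶜ - infDist x (starDomain g)ᶜ| ≤ M := by
  obtain ⟨ω, hω⟩ : (sphere (0 : E) 1).Nonempty := sphere_nonempty.2 zero_le_one
  exact abs_infDist_sub_infDist_le_of_hausdorffEDist_le ((abs_nonneg _).trans (hfg ω hω))
    (hausdorffEDist_compl_starDomain_le hfg) x

theorem tendstoUniformly_infDist_compl_starDomain [Nontrivial E] {ι : Type*} {l : Filter ι}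
    {F : ι → E → ℝ} (hF : TendstoUniformlyOn F f l (sphere 0 1)) :
    TendstoUniformly (fun i x => infDist x (starDomain (F i))ᶜ)
      (fun x => infDist x (starDomain f)ᶜ) l := by
  rw [Metric.tendstoUniformlyOn_iff] at hF
  refine Metric.tendstoUniformly_iff.2 fun ε hε => ?_
  filter_upwards [hF (ε / 2) (half_pos hε)] with i hi x
  exact (abs_infDist_compl_starDomain_sub_le (fun ω hω => (hi ω hω).le) x).trans_lt
    (half_lt_self hε)

theorem hausdorff_complementary_estimate_general [Nontrivial E] (f : E → ℝ) :
    (∀ g : E → ℝ, BddAbove (range fun ω : sphere (0 : E) 1 => |f ω - g ω|) →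
        ∀ x : E, |infDist x (starDomain f)ᶜ - infDist x (starDomain g)ᶜ| ≤
          ⨆ ω : sphere (0 : E) 1, |f ω - g ω|) ∧
      ∀ {ι : Type*} {l : Filter ι} {F : ι → E → ℝ}, TendstoUniformlyOn F f l (sphere 0 1) →
        TendstoUniformly (fun i x => infDist x (starDomain (F i))ᶜ)
          (fun x => infDist x (starDomain f)ᶜ) l :=
  ⟨fun _ hbdd => abs_infDist_compl_starDomain_sub_le fun ω hω => le_ciSup hbdd ⟨ω, hω⟩,
    tendstoUniformly_infDist_compl_starDomain⟩

end StarDomain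

/-- Stability of `Ω_f` in the Hausdorff complementary metric: for `f, g` continuous with
`ρ ≤ f, g ≤ R` on the sphere, the distance functions to the complements of `Ω_f` and
`Ω_g` differ on the hold-all ball `B_R(0)` by at most `(R/ρ) · sup_{S^{n-1}} |f − g|`.
In particular, uniform convergence `f_k → f` on the sphere implies `Ω_{f_k} → Ω_f`
in the Hausdorff complementary metric. -/
theorem hausdorff_complementary_estimate
    {n : ℕ} (hn : 2 ≤ n) (ρ R : ℝ) (hρ : 0 < ρ) (hρR : ρ ≤ R)
    (f g : EuclideanSpace ℝ (Fin n) → ℝ)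
    (hfc : ContinuousOn f (sphere (0 : EuclideanSpace ℝ (Fin n)) 1))
    (hgc : ContinuousOn g (sphere (0 : EuclideanSpace ℝ (Fin n)) 1))
    (hfb : ∀ ω : EuclideanSpace ℝ (Fin n), ‖ω‖ = 1 → ρ ≤ f ω ∧ f ω ≤ R)
    (hgb : ∀ ω : EuclideanSpace ℝ (Fin n), ‖ω‖ = 1 → ρ ≤ g ω ∧ g ω ≤ R) :
    (∀ x : EuclideanSpace ℝ (Fin n), ‖x‖ ≤ R →
        |infDist x (Omega f)ᶜ - infDist x (Omega g)ᶜ| ≤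
          (R / ρ) * ⨆ ω : sphere (0 : EuclideanSpace ℝ (Fin n)) 1, |f ω - g ω|) ∧
      ∀ fk : ℕ → EuclideanSpace ℝ (Fin n) → ℝ,
        (∀ k, ContinuousOn (fk k) (sphere (0 : EuclideanSpace ℝ (Fin n)) 1) ∧
          ∀ ω : EuclideanSpace ℝ (Fin n), ‖ω‖ = 1 → ρ ≤ fk k ω ∧ fk k ω ≤ R) →
        (∀ ε > (0 : ℝ), ∃ K : ℕ, ∀ k ≥ K, ∀ ω : EuclideanSpace ℝ (Fin n), ‖ω‖ = 1 →
          |fk k ω - f ω| < ε) →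
        ∀ ε > (0 : ℝ), ∃ K : ℕ, ∀ k ≥ K, ∀ x : EuclideanSpace ℝ (Fin n), ‖x‖ ≤ R →
          |infDist x (Omega (fk k))ᶜ - infDist x (Omega f)ᶜ| < ε := by
  have : Nontrivial (Fin n) := Fin.nontrivial_iff_two_le.2 hn
  have hbdd : BddAbove (range fun ω : sphere (0 : EuclideanSpace ℝ (Fin n)) 1 => |f ω - g ω|) :=
    image_eq_range (fun ω => |f ω - g ω|) _ ▸
      (isCompact_sphere 0 1).bddAbove_image (hfc.sub hgc).abs
  simp only [Omega_eq_starDomain]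
  obtain ⟨hdist, hlim⟩ := hausdorff_complementary_estimate_general f
  refine ⟨fun x _ => (hdist g hbdd x).trans <|
    le_mul_of_one_le_left (Real.iSup_nonneg fun _ => abs_nonneg _) ((one_le_div hρ).2 hρR),
    fun fk _ hfk ε hε => ?_⟩
  have hunif : TendstoUniformlyOn fk f atTop (sphere 0 1) := by
    simpa only [Metric.tendstoUniformlyOn_iff, eventually_atTop, mem_sphere_zero_iff_norm,
      dist_comm (f _), Real.dist_eq] using hfk
  obtain ⟨K, hK⟩ := eventually_atTop.1 (Metric.tendstoUniformly_iff.1 (hlim hunif) ε hε)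
  refine ⟨K, fun k hk x _ => ?_⟩
  rw [← Real.dist_eq, dist_comm]
  exact hK k hk x
end

section
/- Let h, H : (0,2π) → ℝ be Lebesgue integrable, and let f̄ : [0,2π] → ℝ be continuous and positive with f̄(0) = f̄(2π). Consider the set V_∞ of functions v : [0,2π] → ℝ that are 1-Lipschitz, satisfy v(0) = v(2π), and satisfy ∫₀^{2π} f̄(φ) v(φ) dφ = 0; for such v the derivative v′(φ) exists for almost every φ and satisfies |v′(φ)| ≤ 1. Then there exists g ∈ V_∞ such that ∫₀^{2π} (h(φ) g(φ) + H(φ) g′(φ)) dφ = inf_{v ∈ V_∞} ∫₀^{2π} (h(φ) v(φ) + H(φ) v′(φ)) dφ. -/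
open Real MeasureTheory

/-!
The minimum is sought among functions which are `K`-Lipschitz on all of `ℝ`: every admissible
direction agrees on the interval with such a function. In `C(ℝ, ℝ)` with the topology of locally
uniform convergence these form a compact set by Arzelà–Ascoli, because `∫ f v = 0` and `∫ f ≠ 0`
bound `v` by its oscillation. The functional `v ↦ ∫ (h v + H v′)` is continuous there: for smooth
`H` one integrates by parts, and since `|v′| ≤ K` the general case follows by approximating `H`
in `L¹`.
-/

section

open Set Filter Topology
open scoped NNReal ContDiff Interval

theorem isCompact_setOfPred_lipschitzWith_mem_closedBall {X Y : Type*} [PseudoMetricSpace X]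
    [PseudoMetricSpace Y] [ProperSpace Y] (K : ℝ≥0) (x₀ : X) (y₀ : Y) (R : ℝ) :
    IsCompact {v : C(X, Y) | LipschitzWith K v ∧ v x₀ ∈ Metric.closedBall y₀ R} := by
  refine ArzelaAscoli.isCompact_of_equicontinuous _ ?_
    (LipschitzWith.uniformEquicontinuous _ K fun v ↦ v.2.1).equicontinuous
  have himage : ContinuousMap.toFun '' {v : C(X, Y) | LipschitzWith K v ∧
      v x₀ ∈ Metric.closedBall y₀ R} =
      {v : X → Y | LipschitzWith K v} ∩ {v | v x₀ ∈ Metric.closedBall y₀ R} :=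
    Subset.antisymm (image_subset_iff.2 fun _ hv ↦ hv)
      fun v hv ↦ ⟨⟨v, hv.1.continuous⟩, hv, rfl⟩
  rw [himage]
  refine (isCompact_univ_pi fun x ↦
    isCompact_closedBall y₀ (K * dist x x₀ + R)).of_isClosed_subset ?_ ?_
  · exact (isClosed_setOfPred_lipschitzWith K).inter
      (Metric.isClosed_closedBall.preimage (continuous_apply x₀))
  · rintro v ⟨hv, hvx₀⟩ x -
    exact (dist_triangle _ (v x₀) _).trans (add_le_add (hv.dist_le_mul x x₀) hvx₀)

theorem exists_contDiff_integral_norm_sub_le {E F : Type*} [NormedAddCommGroup E]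
    [NormedSpace ℝ E] [FiniteDimensional ℝ E] [MeasurableSpace E] [BorelSpace E]
    [NormedAddCommGroup F] [NormedSpace ℝ F] {μ : Measure E} [IsFiniteMeasureOnCompacts μ]
    {w : E → F} (hw : Integrable w μ) {ε : ℝ} (hε : 0 < ε) :
    ∃ k : E → F, HasCompactSupport k ∧ ContDiff ℝ ∞ k ∧ ∫ x, ‖w x - k x‖ ∂μ ≤ ε := by
  obtain ⟨k, hk_supp, hk, hwk⟩ := (memLp_one_iff_integrable.2 hw).exist_eLpNorm_sub_le
    ENNReal.one_ne_top le_rfl hε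
  have hk_int : Integrable k μ := hk.continuous.integrable_of_hasCompactSupport hk_supp
  refine ⟨k, hk_supp, hk, ?_⟩
  calc ∫ x, ‖w x - k x‖ ∂μ = (eLpNorm (w - k) 1 μ).toReal := by
        rw [eLpNorm_one_eq_lintegral_enorm]
        exact integral_norm_eq_lintegral_enorm (hw.sub hk_int).aestronglyMeasurable
    _ ≤ ε := ENNReal.toReal_le_of_le_ofReal hε.le hwk

variable {a b : ℝ} {K : ℝ≥0} {w f v : ℝ → ℝ}

theorem continuous_intervalIntegral_mul (hw : IntervalIntegrable w volume a b) :
    Continuous fun v : C(ℝ, ℝ) ↦ ∫ x in a..b, w x * v x := by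
  refine continuous_iff_continuousAt.2 fun v₀ ↦ ?_
  obtain ⟨R, hR⟩ := (isCompact_uIcc.image v₀.continuous).isBounded.subset_ball 0
  refine intervalIntegral.continuousAt_of_dominated_interval (bound := fun x ↦ ‖w x‖ * R)
    (.of_forall fun v ↦
      (hw.mul_continuousOn v.continuous.continuousOn).aestronglyMeasurable_restrict_uIoc)
    ?_ (hw.norm.mul_const R)
    (.of_forall fun x _ ↦ (continuous_const.mul (continuous_eval_const x)).continuousAt)
  filter_upwards [ContinuousMap.eventually_mapsTo isCompact_uIcc Metric.isOpen_ball
    (mapsTo_iff_image_subset.2 hR)] with v hv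
  refine .of_forall fun x hx ↦ ?_
  have hvx : ‖v x‖ ≤ R := (mem_ball_zero_iff.1 (hv (uIoc_subset_uIcc hx))).le
  rw [norm_mul]
  gcongr

theorem norm_mul_deriv_le_of_lipschitzWith (hv : LipschitzWith K v) (x : ℝ) :
    ‖w x * deriv v x‖ ≤ ‖w x‖ * K :=
  (norm_mul_le _ _).trans (by gcongr; exact norm_deriv_le_of_lipschitz hv)

theorem intervalIntegrable_mul_deriv_of_lipschitzWith (hw : IntervalIntegrable w volume a b)
    (hv : LipschitzWith K v) : IntervalIntegrable (fun x ↦ w x * deriv v x) volume a b :=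
  (hw.norm.mul_const (K : ℝ)).mono_fun'
    (hw.aestronglyMeasurable_restrict_uIoc.mul (measurable_deriv v).aestronglyMeasurable)
    (.of_forall (norm_mul_deriv_le_of_lipschitzWith hv))

theorem norm_intervalIntegral_mul_deriv_le (hw : IntervalIntegrable w volume a b)
    (hv : LipschitzWith K v) :
    ‖∫ x in a..b, w x * deriv v x‖ ≤ (∫ x in Ι a b, ‖w x‖) * K := calc
  ‖∫ x in a..b, w x * deriv v x‖ ≤ ∫ x in Ι a b, ‖w x * deriv v x‖ :=
    intervalIntegral.norm_integral_le_integral_norm_uIoc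
  _ ≤ ∫ x in Ι a b, ‖w x‖ * K :=
    integral_mono (intervalIntegrable_mul_deriv_of_lipschitzWith hw hv).def'.norm
      (hw.norm.mul_const _).def' (norm_mul_deriv_le_of_lipschitzWith hv)
  _ = (∫ x in Ι a b, ‖w x‖) * K := integral_mul_const _ _

theorem continuousOn_intervalIntegral_mul_deriv_of_contDiff (hw : ContDiff ℝ 1 w) :
    ContinuousOn (fun v : C(ℝ, ℝ) ↦ ∫ x in a..b, w x * deriv v x) {v | LipschitzWith K v} := by
  have hw' : IntervalIntegrable (deriv w) volume a b :=
    hw.continuous_deriv_one.intervalIntegrable _ _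
  have hcont : Continuous fun v : C(ℝ, ℝ) ↦
      w b * v b - w a * v a - ∫ x in a..b, deriv w x * v x :=
    ((continuous_const.mul (continuous_eval_const b)).sub
      (continuous_const.mul (continuous_eval_const a))).sub (continuous_intervalIntegral_mul hw')
  exact hcont.continuousOn.congr fun v hv ↦
    hw.contDiffOn.absolutelyContinuousOnInterval.integral_mul_deriv_eq_deriv_mul
      hv.lipschitzOnWith.absolutelyContinuousOnInterval

theorem continuousOn_intervalIntegral_mul_deriv (hw : IntervalIntegrable w volume a b) :
    ContinuousOn (fun v : C(ℝ, ℝ) ↦ ∫ x in a..b, w x * deriv v x) {v | LipschitzWith K v} := by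
  refine continuousOn_of_uniform_approx_of_continuousOn fun U hU ↦ ?_
  obtain ⟨ε, hε, hεU⟩ := Metric.mem_uniformity_dist.1 hU
  obtain ⟨k, -, hk, hwk⟩ := exists_contDiff_integral_norm_sub_le hw.def'
    (show 0 < ε / (K + 1) by positivity)
  have hk_int : IntervalIntegrable k volume a b := hk.continuous.intervalIntegrable _ _
  refine ⟨fun v ↦ ∫ x in a..b, k x * deriv v x,
    continuousOn_intervalIntegral_mul_deriv_of_contDiff (hk.of_le (mod_cast le_top)),
    fun v hv ↦ hεU ?_⟩
  calc dist (∫ x in a..b, w x * deriv v x) (∫ x in a..b, k x * deriv v x)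
    _ = ‖∫ x in a..b, (w x - k x) * deriv v x‖ := by
      simp only [dist_eq_norm, sub_mul]
      rw [intervalIntegral.integral_sub (intervalIntegrable_mul_deriv_of_lipschitzWith hw hv)
        (intervalIntegrable_mul_deriv_of_lipschitzWith hk_int hv)]
    _ ≤ (∫ x in Ι a b, ‖w x - k x‖) * K := norm_intervalIntegral_mul_deriv_le (hw.sub hk_int) hv
    _ ≤ ε / (K + 1) * K := by gcongr
    _ < ε := by
      rw [div_mul_eq_mul_div, div_lt_iff₀ (by positivity)]
      linarith

theorem norm_mul_norm_integral_le_of_integral_mul_eq_zero (hab : a ≤ b)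
    (hf : IntervalIntegrable f volume a b) (hv : LipschitzOnWith K v (Icc a b))
    (hfv : ∫ x in a..b, f x * v x = 0) {c : ℝ} (hc : c ∈ Icc a b) :
    ‖v c‖ * ‖∫ x in a..b, f x‖ ≤ (∫ x in a..b, ‖f x‖) * (K * (b - a)) := by
  have hfv_int : IntervalIntegrable (fun x ↦ f x * v x) volume a b :=
    hf.mul_continuousOn (by simpa only [uIcc_of_le hab] using hv.continuousOn)
  have hosc : ∀ x ∈ Icc a b, ‖v c - v x‖ ≤ K * (b - a) := fun x hx ↦
    (LipschitzOnWith.dist_le_mul hv c hc x hx).trans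
      (mul_le_mul_of_nonneg_left (Real.dist_le_of_mem_Icc hc hx) K.2)
  calc ‖v c‖ * ‖∫ x in a..b, f x‖ = ‖∫ x in a..b, (f x * v c - f x * v x)‖ := by
        rw [intervalIntegral.integral_sub (hf.mul_const _) hfv_int, hfv, sub_zero,
          intervalIntegral.integral_mul_const, norm_mul, mul_comm]
    _ ≤ ∫ x in a..b, ‖f x‖ * (K * (b - a)) := by
        refine intervalIntegral.norm_integral_le_of_norm_le hab (.of_forall fun x hx ↦ ?_)
          (hf.norm.mul_const _)
        rw [← mul_sub, norm_mul]
        exact mul_le_mul_of_nonneg_left (hosc x (Ioc_subset_Icc_self hx)) (norm_nonneg _)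
    _ = (∫ x in a..b, ‖f x‖) * (K * (b - a)) := intervalIntegral.integral_mul_const _ _

/-- The class `V_∞` of admissible directions, on an interval `[a, b]` and with Lipschitz constant
`K`. Its elements are functions on all of `ℝ` whose values outside `[a, b]` are irrelevant. -/
def admissibleDirections (a b : ℝ) (K : ℝ≥0) (f : ℝ → ℝ) : Set (ℝ → ℝ) :=
  {v | LipschitzOnWith K v (Icc a b) ∧ v a = v b ∧ ∫ x in a..b, f x * v x = 0}

/-- The shape derivative with densities `h` and `H` on `[a, b]`, in the direction `v`: the
functional to be minimised. If `v` is Lipschitz on `[a, b]`, then `deriv v` is its derivative at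
almost every point of `[a, b]`, and `0` where `v` is not differentiable. -/
noncomputable def shapeDerivative (a b : ℝ) (h H v : ℝ → ℝ) : ℝ :=
  ∫ x in a..b, (h x * v x + H x * deriv v x)

variable {h H u : ℝ → ℝ}

theorem zero_mem_admissibleDirections : 0 ∈ admissibleDirections a b K f :=
  ⟨(LipschitzWith.const' 0).lipschitzOnWith, rfl, by simp⟩

theorem mem_admissibleDirections_of_eqOn (hab : a ≤ b) (hu : u ∈ admissibleDirections a b K f)
    (huv : EqOn u v (Icc a b)) : v ∈ admissibleDirections a b K f := by
  obtain ⟨huK, hend, hfu⟩ := hu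
  refine ⟨fun x hx y hy ↦ by simpa only [huv hx, huv hy] using huK hx hy, ?_, ?_⟩
  · rw [← huv (left_mem_Icc.2 hab), ← huv (right_mem_Icc.2 hab), hend]
  · rw [← hfu]
    exact intervalIntegral.integral_congr_Ioo_of_le hab fun x hx ↦
      congrArg (f x * ·) (huv (Ioo_subset_Icc_self hx)).symm

theorem shapeDerivative_congr (hab : a ≤ b) (huv : EqOn u v (Icc a b)) :
    shapeDerivative a b h H u = shapeDerivative a b h H v := by
  refine intervalIntegral.integral_congr_Ioo_of_le hab fun x hx ↦ ?_
  have hderiv : deriv u x = deriv v x :=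
    (huv.eventuallyEq_of_mem (Icc_mem_nhds hx.1 hx.2)).deriv_eq
  simp only [huv (Ioo_subset_Icc_self hx), hderiv]

theorem continuousOn_shapeDerivative (hh : IntervalIntegrable h volume a b)
    (hH : IntervalIntegrable H volume a b) :
    ContinuousOn (fun v : C(ℝ, ℝ) ↦ shapeDerivative a b h H v) {v | LipschitzWith K v} :=
  ((continuous_intervalIntegral_mul hh).continuousOn.add
    (continuousOn_intervalIntegral_mul_deriv hH)).congr fun v hv ↦
      intervalIntegral.integral_add (hh.mul_continuousOn v.continuous.continuousOn)
        (intervalIntegrable_mul_deriv_of_lipschitzWith hH hv)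

theorem isCompact_setOfPred_lipschitzWith_mem_admissibleDirections (hab : a ≤ b)
    (hf : IntervalIntegrable f volume a b) (hf₀ : ∫ x in a..b, f x ≠ 0) :
    IsCompact {v : C(ℝ, ℝ) | LipschitzWith K v ∧ ⇑v ∈ admissibleDirections a b K f} := by
  have hclosed : IsClosed {v : C(ℝ, ℝ) | v a = v b ∧ ∫ x in a..b, f x * v x = 0} :=
    (isClosed_eq (continuous_eval_const a) (continuous_eval_const b)).inter
      (isClosed_eq (continuous_intervalIntegral_mul hf) continuous_const)
  convert (isCompact_setOfPred_lipschitzWith_mem_closedBall K a (0 : ℝ)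
    ((∫ x in a..b, ‖f x‖) * (K * (b - a)) / ‖∫ x in a..b, f x‖)).inter_right hclosed using 1
  ext v
  constructor
  · rintro ⟨hv, hvK, hend, hfv⟩
    refine ⟨⟨hv, ?_⟩, hend, hfv⟩
    rw [mem_closedBall_zero_iff, le_div_iff₀ (norm_pos_iff.2 hf₀)]
    exact norm_mul_norm_integral_le_of_integral_mul_eq_zero hab hf hvK hfv (left_mem_Icc.2 hab)
  · rintro ⟨⟨hv, -⟩, hend, hfv⟩
    exact ⟨hv, hv.lipschitzOnWith, hend, hfv⟩

theorem exists_steepest_descent_direction_dim2_general (hab : a ≤ b)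
    (hh : IntervalIntegrable h volume a b) (hH : IntervalIntegrable H volume a b)
    (hf : IntervalIntegrable f volume a b) (hf₀ : ∫ x in a..b, f x ≠ 0) :
    ∃ g ∈ admissibleDirections a b K f,
      IsMinOn (shapeDerivative a b h H) (admissibleDirections a b K f) g := by
  obtain ⟨g, ⟨-, hg⟩, hmin⟩ :=
    (isCompact_setOfPred_lipschitzWith_mem_admissibleDirections (K := K) hab hf hf₀).exists_isMinOn
      ⟨0, LipschitzWith.const' 0, zero_mem_admissibleDirections⟩
      ((continuousOn_shapeDerivative hh hH).mono fun _ hv ↦ hv.1)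
  refine ⟨g, hg, fun v hv ↦ ?_⟩
  obtain ⟨u, hu, hvu⟩ := hv.1.extend_real
  calc shapeDerivative a b h H g ≤ shapeDerivative a b h H u :=
        hmin (show ⟨u, hu.continuous⟩ ∈ _ from ⟨hu, mem_admissibleDirections_of_eqOn hab hv hvu⟩)
    _ = shapeDerivative a b h H v := (shapeDerivative_congr hab hvu).symm

end

/-- Existence of a steepest descent direction for the 2-dimensional shape derivative:
for `h, H` integrable on `(0,2π)` and `f̄` continuous positive on `[0,2π]` with
`f̄(0) = f̄(2π)`, the functional `v ↦ ∫₀^{2π} (h v + H v′)` attains its infimum over the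
class `V_∞` of `1`-Lipschitz functions with `v(0) = v(2π)` and `∫₀^{2π} f̄ v = 0`.
(For a Lipschitz `v`, `deriv v` agrees almost everywhere with the derivative, which
exists a.e. by Rademacher's theorem and satisfies `|v′| ≤ 1`.) -/
theorem exists_steepest_descent_direction_dim2
    (h H : ℝ → ℝ)
    (hh : IntegrableOn h (Set.Ioo 0 (2 * π)))
    (hH : IntegrableOn H (Set.Ioo 0 (2 * π)))
    (fbar : ℝ → ℝ) (hfc : ContinuousOn fbar (Set.Icc 0 (2 * π)))
    (hfpos : ∀ φ ∈ Set.Icc (0 : ℝ) (2 * π), 0 < fbar φ)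
    (hfper : fbar 0 = fbar (2 * π))
    (V : Set (ℝ → ℝ))
    (hV : V = {v | LipschitzOnWith 1 v (Set.Icc 0 (2 * π)) ∧ v 0 = v (2 * π) ∧
      (∫ φ in (0 : ℝ)..(2 * π), fbar φ * v φ) = 0}) :
    ∃ g ∈ V,
      (∫ φ in (0 : ℝ)..(2 * π), (h φ * g φ + H φ * deriv g φ)) =
        sInf ((fun v : ℝ → ℝ =>
          ∫ φ in (0 : ℝ)..(2 * π), (h φ * v φ + H φ * deriv v φ)) '' V) := by
  have hle : (0 : ℝ) ≤ 2 * π := by positivity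
  have hfint : IntervalIntegrable fbar volume 0 (2 * π) :=
    (hfc.mono (Set.uIcc_of_le hle).subset).intervalIntegrable
  have hfbar : 0 < ∫ φ in (0 : ℝ)..(2 * π), fbar φ :=
    intervalIntegral.intervalIntegral_pos_of_pos_on hfint
      (fun φ hφ ↦ hfpos φ (Set.Ioo_subset_Icc_self hφ)) (by positivity)
  obtain ⟨g, hg, hmin⟩ := exists_steepest_descent_direction_dim2_general (K := 1) hle
    ((intervalIntegrable_iff_integrableOn_Ioo_of_le hle).2 hh)
    ((intervalIntegrable_iff_integrableOn_Ioo_of_le hle).2 hH) hfint hfbar.ne'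
  subst hV
  exact ⟨g, hg, ((hmin.isGLB hg).csInf_eq ⟨_, g, hg, rfl⟩).symm⟩
end

section
/- Let q : (0,2π) → ℝ be Lebesgue integrable with ∫₀^{2π} q(t) dt = 0, and let f̄ : [0,2π] → ℝ be continuous and positive. Set G(φ) := −∫₀^{φ} q(t) dt, β* := sup{r ∈ ℝ : |{φ ∈ (0,2π) : G(φ) < r}| ≤ π}, O₊ := {φ : G(φ) > β*}, O₋ := {φ : G(φ) < β*}, O₀ := {φ : G(φ) = β*}, and k := 0 if |O₀| = 0, k := (|O₊| − |O₋|)/|O₀| otherwise. Define ḡ(φ) := α + ∫₀^{φ} (1_{O₋}(t) − 1_{O₊}(t) + k·1_{O₀}(t)) dt, where the constant α ∈ ℝ is chosen so that ∫₀^{2π} f̄(φ) ḡ(φ) dφ = 0. Then ḡ is 1-Lipschitz on [0,2π] with ḡ(0) = ḡ(2π), and ∫₀^{2π} q(φ) ḡ(φ) dφ ≤ ∫₀^{2π} q(φ) v(φ) dφ for every 1-Lipschitz function v : [0,2π] → ℝ with v(0) = v(2π) and ∫₀^{2π} f̄(φ) v(φ) dφ = 0; that is, ḡ is a direction of steepest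 descent for the functional v ↦ ∫₀^{2π} q v dφ in this admissible class. -/
open Real MeasureTheory

/-!
Since `∫ q = 0`, the primitive `G = -∫ q` vanishes at both ends of the interval, and integration by
parts gives `∫ q v = ∫ G v'`. A periodic `v` has `∫ v' = 0`, so subtracting a constant `β` from `G`
changes nothing, and `|v'| ≤ 1` gives `∫ (G - β) v' ≥ -∫ |G - β|`. Equality requires
`v' = -sign (G - β)` wherever `G ≠ β`, and the values on `{G = β}` are free. A constant value `k`
there can be chosen with `|k| ≤ 1` and `∫ v' = 0` exactly when `β` is a median of the distribution
of `G`, which is what the supremum provides.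
-/

open Set Filter Topology
open scoped ENNReal NNReal

/-- A median of a measure on the line, not necessarily normalised: neither of the open half-lines
it bounds carries more than half of the mass. -/
structure IsMedian (ν : Measure ℝ) (β : ℝ) : Prop where
  measure_Iio_le : ν (Iio β) ≤ ν univ / 2
  measure_Ioi_le : ν (Ioi β) ≤ ν univ / 2

/-- The extremal slope `v'` as a function of the value of `G`, equal to `-sign (y - β)` for
`y ≠ β` and to the free value `k` at `β`. -/
noncomputable def bangBang (β k y : ℝ) : ℝ :=
  (Iio β).indicator (fun _ ↦ 1) y - (Ioi β).indicator (fun _ ↦ 1) y +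
    k * ({β} : Set ℝ).indicator (fun _ ↦ 1) y

section Quantile

variable {ν : Measure ℝ} {c : ℝ≥0∞} {β : ℝ}

lemma measure_Iio_le_of_isLUB (hβ : IsLUB {r | ν (Iio r) ≤ c} β) : ν (Iio β) ≤ c := by
  obtain ⟨u, hu_mono, -, hu_lim, hu⟩ := hβ.exists_seq_monotone_tendsto hβ.nonempty
  have hsub : Iio β ⊆ ⋃ n, Iio (u n) := fun x hx ↦
    mem_iUnion.2 (hu_lim.eventually_const_lt hx).exists
  calc ν (Iio β) ≤ ν (⋃ n, Iio (u n)) := measure_mono hsub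
    _ = ⨆ n, ν (Iio (u n)) := Monotone.measure_iUnion fun _ _ h ↦ Iio_subset_Iio (hu_mono h)
    _ ≤ c := iSup_le hu

lemma le_measure_Iic_of_mem_upperBounds [IsFiniteMeasure ν]
    (hβ : β ∈ upperBounds {r | ν (Iio r) ≤ c}) : c ≤ ν (Iic β) := by
  have hlim : Tendsto (ν ∘ Iio) (𝓝[>] β) (𝓝 (ν (⋂ r > β, Iio r))) :=
    tendsto_measure_biInter_gt (fun _ _ ↦ measurableSet_Iio.nullMeasurableSet)
      (fun _ _ _ h ↦ Iio_subset_Iio h) ⟨β + 1, by simp, measure_ne_top _ _⟩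
  have hIic : ⋂ r > β, Iio r = Iic β := by
    ext x
    simp only [mem_iInter, mem_Iio, mem_Iic, gt_iff_lt]
    exact forall_gt_iff_le
  rw [hIic] at hlim
  refine ge_of_tendsto hlim ?_
  filter_upwards [self_mem_nhdsWithin] with r hr
  exact (not_le.1 fun h ↦ hr.not_ge (hβ h)).le

lemma isLUB_sSup_measure_Iio_le [IsFiniteMeasure ν] (hc₀ : 0 < c) (hc : c < ν univ) :
    IsLUB {r | ν (Iio r) ≤ c} (sSup {r | ν (Iio r) ≤ c}) := by
  have hbot : Tendsto (ν ∘ Iio) atBot (𝓝 0) := by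
    have hinter : ⋂ r : ℝ, Iio r = ∅ := iInter_eq_empty_iff.2 fun r ↦ ⟨r, self_notMem_Iio⟩
    simpa [hinter] using tendsto_measure_iInter_atBot (μ := ν) (s := Iio)
      (fun _ ↦ measurableSet_Iio.nullMeasurableSet) (fun _ _ ↦ Iio_subset_Iio)
      ⟨0, measure_ne_top _ _⟩
  have htop : Tendsto (ν ∘ Iio) atTop (𝓝 (ν univ)) := by
    simpa using tendsto_measure_iUnion_atTop (μ := ν) (s := Iio) fun _ _ ↦ Iio_subset_Iio
  obtain ⟨r, hr⟩ := (hbot.eventually_le_const hc₀).exists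
  obtain ⟨M, hM⟩ := (htop.eventually_const_lt hc).exists
  refine isLUB_csSup ⟨r, hr⟩ ⟨M, fun s hs ↦ ?_⟩
  by_contra! hMs
  exact (hM.trans_le (measure_mono (Iio_subset_Iio hMs.le))).not_ge hs

end Quantile

section Median

variable {ν : Measure ℝ} [IsFiniteMeasure ν] {β k : ℝ}

lemma isMedian_sSup : IsMedian ν (sSup {r | ν (Iio r) ≤ ν univ / 2}) := by
  rcases eq_or_ne ν 0 with rfl | hν
  · constructor <;> simp
  have huniv : ν univ ≠ 0 := Measure.measure_univ_ne_zero.2 hν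
  have hLUB := isLUB_sSup_measure_Iio_le (ENNReal.half_pos huniv)
    (ENNReal.half_lt_self huniv (measure_ne_top ν univ))
  refine ⟨measure_Iio_le_of_isLUB hLUB, ?_⟩
  rw [← compl_Iic, measure_compl measurableSet_Iic (measure_ne_top _ _), tsub_le_iff_right]
  calc ν univ = ν univ / 2 + ν univ / 2 := (ENNReal.add_halves _).symm
    _ ≤ ν univ / 2 + ν (Iic _) := by gcongr; exact le_measure_Iic_of_mem_upperBounds hLUB.1

lemma IsMedian.abs_measureReal_Ioi_sub_Iio_le (hβ : IsMedian ν β) :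
    |ν.real (Ioi β) - ν.real (Iio β)| ≤ ν.real {β} := by
  have half_le {s : Set ℝ} (hs : ν s ≤ ν univ / 2) : ν.real s ≤ ν.real univ / 2 := by
    simpa [measureReal_def] using
      ENNReal.toReal_mono (ENNReal.div_ne_top (measure_ne_top _ _) two_ne_zero) hs
  have hIio := half_le hβ.measure_Iio_le
  have hIoi := half_le hβ.measure_Ioi_le
  have hIic : ν.real (Iic β) = ν.real (Iio β) + ν.real {β} := by
    rw [← Iio_union_right, measureReal_union (by simp) (measurableSet_singleton β)]
  have htotal : ν.real (Iic β) + ν.real (Ioi β) = ν.real univ := by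
    rw [← compl_Iic, measureReal_add_measureReal_compl measurableSet_Iic]
  rw [abs_le]
  constructor <;> linarith

lemma IsMedian.mul_measureReal_singleton_eq (hβ : IsMedian ν β)
    (hk : ν.real {β} ≠ 0 → k = (ν.real (Ioi β) - ν.real (Iio β)) / ν.real {β}) :
    k * ν.real {β} = ν.real (Ioi β) - ν.real (Iio β) := by
  by_cases hzero : ν.real {β} = 0
  · have hdiff := hβ.abs_measureReal_Ioi_sub_Iio_le
    rw [hzero, abs_nonpos_iff] at hdiff
    rw [hzero, mul_zero, hdiff]
  · rw [hk hzero, div_mul_cancel₀ _ hzero]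

end Median

section BangBang

variable {β k y : ℝ}

lemma bangBang_of_lt (h : y < β) : bangBang β k y = 1 := by
  simp [bangBang, h, h.ne, h.not_gt]

lemma bangBang_of_gt (h : β < y) : bangBang β k y = -1 := by
  simp [bangBang, h, h.ne', h.not_gt]

lemma bangBang_self : bangBang β k β = k := by
  simp [bangBang]

lemma measurable_bangBang : Measurable (bangBang β k) :=
  ((measurable_const.indicator measurableSet_Iio).sub
    (measurable_const.indicator measurableSet_Ioi)).add
      ((measurable_const.indicator (measurableSet_singleton β)).const_mul k)

lemma abs_bangBang_le : |bangBang β k y| ≤ max 1 |k| := by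
  rcases lt_trichotomy y β with h | rfl | h
  · simp [bangBang_of_lt h]
  · simp [bangBang_self]
  · simp [bangBang_of_gt h]

lemma sub_mul_bangBang_le {w : ℝ} (hw : |w| ≤ 1) : (y - β) * bangBang β k y ≤ (y - β) * w := by
  obtain ⟨hw₁, hw₂⟩ := abs_le.1 hw
  rcases lt_trichotomy y β with h | rfl | h
  · rw [bangBang_of_lt h]
    exact mul_le_mul_of_nonpos_left hw₂ (sub_nonpos.2 h.le)
  · simp
  · rw [bangBang_of_gt h]
    exact mul_le_mul_of_nonneg_left hw₁ (sub_nonneg.2 h.le)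

lemma integral_bangBang {ν : Measure ℝ} [IsFiniteMeasure ν] :
    ∫ y, bangBang β k y ∂ν = ν.real (Iio β) - ν.real (Ioi β) + k * ν.real {β} := by
  have hint {s : Set ℝ} (hs : MeasurableSet s) : Integrable (s.indicator fun _ ↦ (1 : ℝ)) ν :=
    (integrable_const 1).indicator hs
  have hIio := hint (measurableSet_Iio (a := β))
  have hIoi := hint (measurableSet_Ioi (a := β))
  have hβ := hint (measurableSet_singleton β)
  simp only [bangBang]
  rw [integral_add (by exact hIio.sub hIoi) (hβ.const_mul k), integral_sub hIio hIoi,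
    integral_const_mul, integral_indicator_const _ measurableSet_Iio,
    integral_indicator_const _ measurableSet_Ioi,
    integral_indicator_const _ (measurableSet_singleton β)]
  simp only [smul_eq_mul, mul_one]

lemma integral_bangBang_comp_eq_zero {Ω : Type*} [MeasurableSpace Ω] {μ : Measure Ω}
    [IsFiniteMeasure μ] {f : Ω → ℝ} (hf : AEMeasurable f μ)
    (hk : k * (μ.map f).real {β} = (μ.map f).real (Ioi β) - (μ.map f).real (Iio β)) :
    ∫ x, bangBang β k (f x) ∂μ = 0 := by
  rw [← integral_map hf measurable_bangBang.aestronglyMeasurable, integral_bangBang, hk]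
  ring

lemma integrable_bangBang_comp {Ω : Type*} [MeasurableSpace Ω] {μ : Measure Ω}
    [IsFiniteMeasure μ] {f : Ω → ℝ} (hf : AEMeasurable f μ) :
    Integrable (fun x ↦ bangBang β k (f x)) μ :=
  .of_bound (measurable_bangBang.comp_aemeasurable hf).aestronglyMeasurable (max 1 |k|)
    (.of_forall fun _ ↦ abs_bangBang_le)

lemma IsMedian.ae_abs_bangBang_le_one {ν : Measure ℝ} [IsFiniteMeasure ν] (hβ : IsMedian ν β)
    (hk : k * ν.real {β} = ν.real (Ioi β) - ν.real (Iio β)) :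
    ∀ᵐ y ∂ν, |bangBang β k y| ≤ 1 := by
  rcases eq_or_ne (ν {β}) 0 with hzero | hne
  · filter_upwards [measure_eq_zero_iff_ae_notMem.1 hzero] with y hy
    rcases lt_or_gt_of_ne hy with h | h
    · simp [bangBang_of_lt h]
    · simp [bangBang_of_gt h]
  · have hpos : 0 < ν.real {β} := ENNReal.toReal_pos hne (measure_ne_top _ _)
    have hmul : |k| * ν.real {β} ≤ 1 * ν.real {β} := by
      rw [one_mul, ← abs_of_pos hpos, ← abs_mul, hk, abs_of_pos hpos]
      exact hβ.abs_measureReal_Ioi_sub_Iio_le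
    have hk_le : |k| ≤ 1 := le_of_mul_le_mul_right hmul hpos
    exact .of_forall fun y ↦ abs_bangBang_le.trans_eq (max_eq_left hk_le)

lemma integral_mul_bangBang_le {Ω : Type*} [MeasurableSpace Ω] {μ : Measure Ω} [IsFiniteMeasure μ]
    {f w : Ω → ℝ} (hf : Integrable f μ) (hw : AEStronglyMeasurable w μ)
    (hw_le : ∀ᵐ x ∂μ, |w x| ≤ 1) (hmean : ∫ x, bangBang β k (f x) ∂μ = ∫ x, w x ∂μ) :
    ∫ x, f x * bangBang β k (f x) ∂μ ≤ ∫ x, f x * w x ∂μ := by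
  have hb : Integrable (fun x ↦ bangBang β k (f x)) μ := integrable_bangBang_comp hf.aemeasurable
  have hfb := hf.mul_bdd hb.aestronglyMeasurable (.of_forall fun _ ↦ abs_bangBang_le)
  have hfw := hf.mul_bdd hw hw_le
  have hβb := hb.const_mul β
  have hβw := (Integrable.of_bound hw _ hw_le).const_mul β
  have hcentred :
      ∫ x, (f x - β) * bangBang β k (f x) ∂μ ≤ ∫ x, (f x - β) * w x ∂μ := by
    simp only [sub_mul]
    refine integral_mono_ae (hfb.sub hβb) (hfw.sub hβw) ?_
    filter_upwards [hw_le] with x hx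
    simpa only [sub_mul] using sub_mul_bangBang_le hx
  simp only [sub_mul] at hcentred
  rw [integral_sub hfb hβb, integral_sub hfw hβw, integral_const_mul, integral_const_mul,
    hmean] at hcentred
  exact (sub_le_sub_iff_right _).1 hcentred

end BangBang

section Primitive

variable {E : Type*} [NormedAddCommGroup E] [NormedSpace ℝ E] {a b : ℝ} {h g : ℝ → E} {α : E}
  {C : ℝ≥0} {q G v : ℝ → ℝ}

lemma lipschitzOnWith_of_eq_add_integral
    (hh : IntervalIntegrable h volume a b) (hC : ∀ᵐ x ∂volume.restrict (Ioo a b), ‖h x‖ ≤ C)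
    (hg : ∀ x ∈ Icc a b, g x = α + ∫ t in a..x, h t) :
    LipschitzOnWith C g (Icc a b) := by
  have hint {z : ℝ} (hz : z ∈ Icc a b) : IntervalIntegrable h volume a z :=
    hh.mono_set (uIcc_subset_uIcc_left (Icc_subset_uIcc hz))
  rw [Measure.restrict_congr_set Ioo_ae_eq_Ioc, ae_restrict_iff' measurableSet_Ioc] at hC
  refine LipschitzOnWith.of_dist_le_mul fun x hx y hy ↦ ?_
  rw [dist_eq_norm, Real.dist_eq, hg x hx, hg y hy, add_sub_add_left_eq_sub,
    intervalIntegral.integral_interval_sub_left (hint hx) (hint hy)]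
  refine intervalIntegral.norm_integral_le_of_norm_le_const_ae ?_
  filter_upwards [hC] with t ht htm
  exact ht (Ioc_subset_Ioc (le_min hy.1 hx.1) (max_le hy.2 hx.2) htm)

lemma ae_deriv_eq_of_eq_add_integral [CompleteSpace E]
    (hh : IntervalIntegrable h volume a b) (hg : ∀ x ∈ Icc a b, g x = α + ∫ t in a..x, h t) :
    ∀ᵐ x ∂volume.restrict (Ioo a b), deriv g x = h x := by
  rw [ae_restrict_iff' measurableSet_Ioo]
  filter_upwards [hh.ae_hasDerivAt_integral] with x hx hxm
  have hxI : x ∈ uIcc a b := Icc_subset_uIcc (Ioo_subset_Icc_self hxm)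
  have hlocal : g =ᶠ[𝓝 x] fun y ↦ α + ∫ t in a..y, h t :=
    eventually_of_mem (Icc_mem_nhds hxm.1 hxm.2) hg
  exact (((hx hxI a left_mem_uIcc).const_add α).congr_of_eventuallyEq hlocal).deriv

lemma ae_norm_deriv_le_of_lipschitzOnWith (hg : LipschitzOnWith C g (Icc a b)) :
    ∀ᵐ x ∂volume.restrict (Ioo a b), ‖deriv g x‖ ≤ C := by
  filter_upwards [self_mem_ae_restrict measurableSet_Ioo] with x hx
  exact norm_deriv_le_of_lipschitzOn (Icc_mem_nhds hx.1 hx.2) hg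

lemma integral_mul_eq_sub_integral_primitive_mul_deriv
    (hq : IntervalIntegrable q volume a b) (hv : AbsolutelyContinuousOnInterval v a b) :
    ∫ x in a..b, q x * v x =
      (∫ x in a..b, q x) * v b - ∫ x in a..b, (∫ t in a..x, q t) * deriv v x := by
  have hQ := hq.absolutelyContinuousOnInterval_intervalIntegral left_mem_uIcc
  have hderiv : ∫ x in a..b, deriv (fun y ↦ ∫ t in a..y, q t) x * v x =
      ∫ x in a..b, q x * v x := by
    refine intervalIntegral.integral_congr_ae ?_
    filter_upwards [hq.ae_hasDerivAt_integral] with x hx hxm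
    rw [(hx (uIoc_subset_uIcc hxm) a left_mem_uIcc).deriv]
  rw [hQ.integral_mul_deriv_eq_deriv_mul hv, hderiv, intervalIntegral.integral_same]
  ring

lemma continuousOn_of_eq_neg_integral (hq : IntervalIntegrable q volume a b)
    (hG : ∀ x ∈ Icc a b, G x = -∫ t in a..x, q t) : ContinuousOn G (Icc a b) :=
  ((intervalIntegral.continuousOn_primitive_interval' hq left_mem_uIcc).neg.mono
    Icc_subset_uIcc).congr hG

lemma aemeasurable_of_eq_neg_integral (hq : IntervalIntegrable q volume a b)
    (hG : ∀ x ∈ Icc a b, G x = -∫ t in a..x, q t) : AEMeasurable G (volume.restrict (Ioo a b)) :=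
  ((continuousOn_of_eq_neg_integral hq hG).mono Ioo_subset_Icc_self).aemeasurable measurableSet_Ioo

lemma intervalIntegral_eq_integral_Ioo (hab : a ≤ b) (h : ℝ → E) :
    ∫ x in a..b, h x = ∫ x in Ioo a b, h x := by
  rw [intervalIntegral.integral_of_le hab, integral_Ioc_eq_integral_Ioo]

lemma integral_mul_eq_integral_Ioo_mul_deriv (hab : a ≤ b)
    (hq : IntervalIntegrable q volume a b) (hq₀ : ∫ t in a..b, q t = 0)
    (hG : ∀ x ∈ Icc a b, G x = -∫ t in a..x, q t)
    (hv : AbsolutelyContinuousOnInterval v a b) :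
    ∫ x in a..b, q x * v x = ∫ x in Ioo a b, G x * deriv v x := by
  rw [integral_mul_eq_sub_integral_primitive_mul_deriv hq hv, hq₀, zero_mul, zero_sub,
    ← intervalIntegral.integral_neg, intervalIntegral_eq_integral_Ioo hab]
  refine setIntegral_congr_fun measurableSet_Ioo fun x hx ↦ ?_
  simp only [hG x (Ioo_subset_Icc_self hx), neg_mul]

end Primitive

section Descent

variable {a b β k : ℝ} {q G g : ℝ → ℝ}

lemma integral_mul_le_of_ae_deriv_eq_bangBang {v : ℝ → ℝ} (hab : a ≤ b)
    (hq : IntervalIntegrable q volume a b) (hq₀ : ∫ t in a..b, q t = 0)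
    (hG : ∀ x ∈ Icc a b, G x = -∫ t in a..x, q t)
    (hg : AbsolutelyContinuousOnInterval g a b) (hg_per : g a = g b)
    (hg_deriv : ∀ᵐ x ∂volume.restrict (Ioo a b), deriv g x = bangBang β k (G x))
    (hv : LipschitzOnWith 1 v (Icc a b)) (hv_per : v a = v b) :
    ∫ x in a..b, q x * g x ≤ ∫ x in a..b, q x * v x := by
  have hv_ac : AbsolutelyContinuousOnInterval v a b :=
    LipschitzOnWith.absolutelyContinuousOnInterval (by rwa [uIcc_of_le hab])
  have hG_int : IntegrableOn G (Ioo a b) :=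
    (continuousOn_of_eq_neg_integral hq hG).integrableOn_Icc.mono_set Ioo_subset_Icc_self
  have mean_deriv_eq_zero {w : ℝ → ℝ} (hw : AbsolutelyContinuousOnInterval w a b)
      (hw_per : w a = w b) : ∫ x in Ioo a b, deriv w x = 0 := by
    rw [← intervalIntegral_eq_integral_Ioo hab, hw.integral_deriv_eq_sub, hw_per, sub_self]
  have hmean : ∫ x in Ioo a b, bangBang β k (G x) = ∫ x in Ioo a b, deriv v x := by
    rw [← integral_congr_ae hg_deriv, mean_deriv_eq_zero hg hg_per,
      mean_deriv_eq_zero hv_ac hv_per]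
  calc ∫ x in a..b, q x * g x = ∫ x in Ioo a b, G x * deriv g x :=
        integral_mul_eq_integral_Ioo_mul_deriv hab hq hq₀ hG hg
    _ = ∫ x in Ioo a b, G x * bangBang β k (G x) :=
        integral_congr_ae (hg_deriv.mono fun x hx ↦ congrArg (G x * ·) hx)
    _ ≤ ∫ x in Ioo a b, G x * deriv v x :=
        integral_mul_bangBang_le hG_int (measurable_deriv v).aestronglyMeasurable
          (ae_norm_deriv_le_of_lipschitzOnWith hv) hmean
    _ = ∫ x in a..b, q x * v x :=
        (integral_mul_eq_integral_Ioo_mul_deriv hab hq hq₀ hG hv_ac).symm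

lemma lipschitz_periodic_minimiser_of_ae_eq_bangBang (hab : a ≤ b)
    (hq : IntervalIntegrable q volume a b) (hq₀ : ∫ t in a..b, q t = 0)
    (hG : ∀ x ∈ Icc a b, G x = -∫ t in a..x, q t)
    {ν : Measure ℝ} (hν : ν = (volume.restrict (Ioo a b)).map G) (hβ : IsMedian ν β)
    (hk : k * ν.real {β} = ν.real (Ioi β) - ν.real (Iio β))
    {h : ℝ → ℝ} (hh : ∀ᵐ x ∂volume.restrict (Ioo a b), h x = bangBang β k (G x))
    {α : ℝ} (hg : ∀ x ∈ Icc a b, g x = α + ∫ t in a..x, h t) :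
    LipschitzOnWith 1 g (Icc a b) ∧ g a = g b ∧
      ∀ v : ℝ → ℝ, LipschitzOnWith 1 v (Icc a b) → v a = v b →
        ∫ x in a..b, q x * g x ≤ ∫ x in a..b, q x * v x := by
  subst hν
  have hG_meas := aemeasurable_of_eq_neg_integral hq hG
  have hh_int : IntervalIntegrable h volume a b :=
    (intervalIntegrable_iff_integrableOn_Ioo_of_le hab).2
      ((integrable_bangBang_comp hG_meas).congr (hh.mono fun _ hx ↦ hx.symm))
  have hh_le : ∀ᵐ x ∂volume.restrict (Ioo a b), ‖h x‖ ≤ (1 : ℝ≥0) := by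
    filter_upwards [hh, ae_of_ae_map hG_meas (hβ.ae_abs_bangBang_le_one hk)] with x hx hle
    simpa [hx] using hle
  have hh_mean : ∫ x in a..b, h x = 0 := by
    rw [intervalIntegral_eq_integral_Ioo hab, integral_congr_ae hh,
      integral_bangBang_comp_eq_zero hG_meas hk]
  have hg_lip : LipschitzOnWith 1 g (Icc a b) := lipschitzOnWith_of_eq_add_integral hh_int hh_le hg
  have hg_per : g a = g b := by
    rw [hg a (left_mem_Icc.2 hab), hg b (right_mem_Icc.2 hab), hh_mean,
      intervalIntegral.integral_same]
  have hg_ac : AbsolutelyContinuousOnInterval g a b :=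
    LipschitzOnWith.absolutelyContinuousOnInterval (by rwa [uIcc_of_le hab])
  have hg_deriv : ∀ᵐ x ∂volume.restrict (Ioo a b), deriv g x = bangBang β k (G x) := by
    filter_upwards [ae_deriv_eq_of_eq_add_integral hh_int hg, hh] with x hgx hhx
    rw [hgx, hhx]
  exact ⟨hg_lip, hg_per, fun v hv hv_per ↦
    integral_mul_le_of_ae_deriv_eq_bangBang hab hq hq₀ hG hg_ac hg_per hg_deriv hv hv_per⟩

lemma map_restrict_apply {Ω Ω' : Type*} [MeasurableSpace Ω] [MeasurableSpace Ω'] {μ : Measure Ω}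
    {s : Set Ω} {t : Set Ω'} {f : Ω → Ω'} (hf : AEMeasurable f (μ.restrict s))
    (hs : MeasurableSet s) (ht : MeasurableSet t) :
    (μ.restrict s).map f t = μ {x ∈ s | f x ∈ t} := by
  rw [Measure.map_apply_of_aemeasurable hf ht, Measure.restrict_apply' hs, inter_comm]
  rfl

lemma isMedian_map_restrict_Ioo_sSup (hG : AEMeasurable G (volume.restrict (Ioo a b))) :
    IsMedian ((volume.restrict (Ioo a b)).map G)
      (sSup {r | volume {x ∈ Ioo a b | G x < r} ≤ ENNReal.ofReal ((b - a) / 2)}) := by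
  convert isMedian_sSup (ν := (volume.restrict (Ioo a b)).map G) using 5 with r
  · exact (map_restrict_apply hG measurableSet_Ioo measurableSet_Iio).symm
  · simp [Measure.map_apply_of_aemeasurable hG, ENNReal.ofReal_div_of_pos]

end Descent

theorem optimal_direction_is_minimiser_general {a b : ℝ} (hab : a ≤ b)
    (q : ℝ → ℝ) (hq : IntervalIntegrable q volume a b) (hq0 : ∫ t in a..b, q t = 0)
    (G : ℝ → ℝ) (hG : ∀ φ ∈ Icc a b, G φ = -∫ t in a..φ, q t)
    (β : ℝ) (hβ : IsMedian ((volume.restrict (Ioo a b)).map G) β)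
    (Op Om Oz : Set ℝ)
    (hOp : Op = {φ ∈ Ioo a b | G φ > β})
    (hOm : Om = {φ ∈ Ioo a b | G φ < β})
    (hOz : Oz = {φ ∈ Ioo a b | G φ = β})
    (k : ℝ)
    (hk : volume Oz ≠ 0 → k = ((volume Op).toReal - (volume Om).toReal) / (volume Oz).toReal)
    (α : ℝ) (g : ℝ → ℝ)
    (hg : ∀ φ ∈ Icc a b, g φ = α + ∫ t in a..φ,
      (Om.indicator (fun _ => (1 : ℝ)) t - Op.indicator (fun _ => (1 : ℝ)) t +
        k * Oz.indicator (fun _ => (1 : ℝ)) t)) :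
    LipschitzOnWith 1 g (Icc a b) ∧ g a = g b ∧
      ∀ v : ℝ → ℝ, LipschitzOnWith 1 v (Icc a b) → v a = v b →
        ∫ φ in a..b, q φ * g φ ≤ ∫ φ in a..b, q φ * v φ := by
  set ν := (volume.restrict (Ioo a b)).map G with hν
  have map_apply {s : Set ℝ} (hs : MeasurableSet s) : ν s = volume {φ ∈ Ioo a b | G φ ∈ s} :=
    map_restrict_apply (aemeasurable_of_eq_neg_integral hq hG) measurableSet_Ioo hs
  have hOm_vol : ν (Iio β) = volume Om := hOm ▸ map_apply measurableSet_Iio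
  have hOp_vol : ν (Ioi β) = volume Op := hOp ▸ map_apply measurableSet_Ioi
  have hOz_vol : ν {β} = volume Oz := hOz ▸ map_apply (measurableSet_singleton β)
  have hbalance : k * ν.real {β} = ν.real (Ioi β) - ν.real (Iio β) := by
    refine hβ.mul_measureReal_singleton_eq fun hne ↦ ?_
    simp only [measureReal_def, hOm_vol, hOp_vol, hOz_vol] at hne ⊢
    exact hk fun hzero ↦ hne (by simp [hzero])
  refine lipschitz_periodic_minimiser_of_ae_eq_bangBang hab hq hq0 hG hν hβ hbalance ?_ hg
  filter_upwards [self_mem_ae_restrict measurableSet_Ioo] with x hx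
  simp [hOm, hOp, hOz, bangBang, indicator, hx.1, hx.2]

/-- The function `ḡ(φ) = α + ∫₀^φ (1_{O₋} − 1_{O₊} + k·1_{O₀})`, with `α` chosen so that
`∫₀^{2π} f̄ ḡ = 0`, is `1`-Lipschitz on `[0,2π]`, satisfies `ḡ(0) = ḡ(2π)`, and is a
direction of steepest descent: `∫₀^{2π} q ḡ ≤ ∫₀^{2π} q v` for every `1`-Lipschitz `v`
with `v(0) = v(2π)` and `∫₀^{2π} f̄ v = 0`. -/
theorem optimal_direction_is_minimiser
    (q : ℝ → ℝ) (hq : IntegrableOn q (Set.Ioo 0 (2 * π)))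
    (hq0 : (∫ t in (0 : ℝ)..(2 * π), q t) = 0)
    (fbar : ℝ → ℝ) (hfc : ContinuousOn fbar (Set.Icc 0 (2 * π)))
    (hfpos : ∀ φ ∈ Set.Icc (0 : ℝ) (2 * π), 0 < fbar φ)
    (G : ℝ → ℝ) (hG : ∀ φ : ℝ, G φ = -∫ t in (0 : ℝ)..φ, q t)
    (β : ℝ)
    (hβ : β = sSup {r : ℝ |
      volume {φ ∈ Set.Ioo (0 : ℝ) (2 * π) | G φ < r} ≤ ENNReal.ofReal π})
    (Op Om Oz : Set ℝ)
    (hOp : Op = {φ ∈ Set.Ioo (0 : ℝ) (2 * π) | G φ > β})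
    (hOm : Om = {φ ∈ Set.Ioo (0 : ℝ) (2 * π) | G φ < β})
    (hOz : Oz = {φ ∈ Set.Ioo (0 : ℝ) (2 * π) | G φ = β})
    (k : ℝ)
    (hk0 : volume Oz = 0 → k = 0)
    (hk1 : volume Oz ≠ 0 → k = ((volume Op).toReal - (volume Om).toReal) / (volume Oz).toReal)
    (α : ℝ) (g : ℝ → ℝ)
    (hg : ∀ φ : ℝ, g φ = α + ∫ t in (0 : ℝ)..φ,
      (Om.indicator (fun _ => (1 : ℝ)) t - Op.indicator (fun _ => (1 : ℝ)) t +
        k * Oz.indicator (fun _ => (1 : ℝ)) t))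
    (hα : (∫ φ in (0 : ℝ)..(2 * π), fbar φ * g φ) = 0) :
    LipschitzOnWith 1 g (Set.Icc 0 (2 * π)) ∧ g 0 = g (2 * π) ∧
      ∀ v : ℝ → ℝ, LipschitzOnWith 1 v (Set.Icc 0 (2 * π)) → v 0 = v (2 * π) →
        (∫ φ in (0 : ℝ)..(2 * π), fbar φ * v φ) = 0 →
        (∫ φ in (0 : ℝ)..(2 * π), q φ * g φ) ≤ ∫ φ in (0 : ℝ)..(2 * π), q φ * v φ := by
  have hq' : IntervalIntegrable q volume 0 (2 * π) :=
    (intervalIntegrable_iff_integrableOn_Ioo_of_le two_pi_pos.le).2 hq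
  have hmed : IsMedian ((volume.restrict (Set.Ioo 0 (2 * π))).map G) β := by
    simpa [hβ] using
      isMedian_map_restrict_Ioo_sSup (aemeasurable_of_eq_neg_integral hq' fun φ _ ↦ hG φ)
  obtain ⟨hg_lip, hg_per, hg_min⟩ := optimal_direction_is_minimiser_general two_pi_pos.le
    q hq' hq0 G (fun φ _ ↦ hG φ) β hmed Op Om Oz hOp hOm hOz k hk1 α g fun φ _ ↦ hg φ
  exact ⟨hg_lip, hg_per, fun v hv hv_per _ ↦ hg_min v hv hv_per⟩
end
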